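/- arXiv:1906.10751 — 3 statements merged into one kernel-verified Lean document; each statement's English description precedes it below -/
import Mathlib

section
/- Let (A_i)_{i∈ℕ}, (B_i)_{i∈ℕ}, (Θ_i)_{i∈ℕ} be mutually independent sequences of random variables such that the A_i are i.i.d. nonnegative real with E[A_i] = a₁ and E[A_i²] = 1, the B_i are i.i.d. nonnegative real with E[B_i] = a₂ and E[B_i²] = 1, and the Θ_i are i.i.d. real-valued (taking values in [−π, π)) with trigonometric moments φ_p = E[exp(i p Θ)] satisfying φ₁ ∈ ℝ and φ₂ ∈ ℝ. Set a = √(a₁ a₂) and H_n = (1/n) Σ_{i=1}^n A_i B_i exp(i Θ_i). Then the ℝ²-valued random vectors √n · (Re(H_n) − a² φ₁, Im(H_n)) converge in distribution (weak convergence of the pushforward laws) to the centered bivariate Gaussian measure with diagonal covariance matrix diag(½(1 + φ₂ − 2 φ₁² a⁴), ½(1 − φ₂)). -/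
open MeasureTheory ProbabilityTheory Complex Filter Topology

/-!
`Hₙ` is the empirical mean of the i.i.d. complex variables `Z = A B e^{iΘ}`, and real and imaginary
parts are coordinates of the real inner product space `ℂ`. By the Cramér–Wold device, convergence of
`√n (Hₙ - E Z)` follows from the one-dimensional central limit theorem for the projections `⟪t, Z⟫`.
The covariance of `(Re Z, Im Z)` is determined by `E Z`, `E |Z|²` and `E Z²`, which by independence
are `E[A] E[B] φ₁`, `E[A²] E[B²]` and `E[A²] E[B²] φ₂`. Since `φ₁` and `φ₂` are real, the two
parts are uncorrelated and the limit is a product of two Gaussian laws.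
-/

section

open scoped InnerProductSpace

variable {Ω Ω' : Type*} {mΩ : MeasurableSpace Ω} {mΩ' : MeasurableSpace Ω'}
  {P : Measure Ω} {P' : Measure Ω'}

section Independence

lemma iIndepFun_curry {ι : Type*} {κ : ι → Type*} {𝓧 : (i : ι) → κ i → Type*}
    [∀ i j, MeasurableSpace (𝓧 i j)] {X : (i : ι) → (j : κ i) → Ω → 𝓧 i j}
    (mX : ∀ i j, Measurable (X i j))
    (h : iIndepFun (fun (p : (i : ι) × κ i) ω ↦ X p.1 p.2 ω) P) :
    iIndepFun (fun i ω ↦ (X i · ω)) P := by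
  have := h.isProbabilityMeasure
  have : ∀ i j, IsProbabilityMeasure (P.map (X i j)) := fun i j ↦
    Measure.isProbabilityMeasure_map (mX i j).aemeasurable
  have hrow : ∀ i, iIndepFun (X i) P := fun i ↦
    h.precomp (g := Sigma.mk i) sigma_mk_injective
  have hcurry : MeasurableEquiv.piCurry 𝓧 ∘ (fun ω p ↦ X p.1 p.2 ω) = fun ω i j ↦ X i j ω := rfl
  rw [iIndepFun_iff_map_fun_eq_infinitePi_map (by fun_prop), ← hcurry,
    ← Measure.map_map (by fun_prop) (by fun_prop), h.map_fun_eq_infinitePi_map (by fun_prop),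
    Measure.infinitePi_map_piCurry (fun i j ↦ P.map (X i j))]
  congrm Measure.infinitePi fun i ↦ ?_
  rw [(hrow i).map_fun_eq_infinitePi_map (mX i)]

lemma iIndepFun_fiber {α ι : Type*} {𝓧 : α → Type*} [∀ a, MeasurableSpace (𝓧 a)]
    {X : (a : α) → Ω → 𝓧 a} (mX : ∀ a, Measurable (X a)) (h : iIndepFun X P) (p : α → ι) :
    iIndepFun (fun i ω (a : {a // p a = i}) ↦ X a ω) P :=
  iIndepFun_curry (X := fun i (a : {a // p a = i}) ↦ X a) (fun _ a ↦ mX a)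
    (h.precomp (Equiv.sigmaFiberEquiv p).injective)

lemma measurable_sumElim_apply {α β 𝓧 : Type*} [MeasurableSpace 𝓧] {f : α → Ω → 𝓧}
    {g : β → Ω → 𝓧} (hf : ∀ a, Measurable (f a)) (hg : ∀ b, Measurable (g b)) :
    ∀ c, Measurable (Sum.elim f g c)
  | .inl a => hf a
  | .inr b => hg b

section Triple

variable {ι 𝓧 : Type*} [MeasurableSpace 𝓧] {X Y Z : ι → Ω → 𝓧}

lemma iIndepFun_prodMk_prodMk_of_iIndepFun_sumElim (mX : ∀ i, Measurable (X i))
    (mY : ∀ i, Measurable (Y i)) (mZ : ∀ i, Measurable (Z i))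
    (h : iIndepFun (Sum.elim X (Sum.elim Y Z)) P) :
    iIndepFun (fun i ω ↦ ((X i ω, Y i ω), Z i ω)) P :=
  (iIndepFun_fiber (measurable_sumElim_apply mX (measurable_sumElim_apply mY mZ)) h
    (Sum.elim id (Sum.elim id id))).comp
    (fun _ x ↦ ((x ⟨.inl _, rfl⟩, x ⟨.inr (.inl _), rfl⟩), x ⟨.inr (.inr _), rfl⟩))
    fun _ ↦ by fun_prop

lemma indepFun_of_iIndepFun_sumElim (h : iIndepFun (Sum.elim X (Sum.elim Y Z)) P) (i : ι) :
    IndepFun (X i) (Y i) P :=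
  h.indepFun (i := .inl i) (j := .inr (.inl i)) (by simp)

lemma indepFun_prodMk_of_iIndepFun_sumElim (mX : ∀ i, Measurable (X i))
    (mY : ∀ i, Measurable (Y i)) (mZ : ∀ i, Measurable (Z i))
    (h : iIndepFun (Sum.elim X (Sum.elim Y Z)) P) (i : ι) :
    IndepFun (fun ω ↦ (X i ω, Y i ω)) (Z i) P :=
  h.indepFun_prodMk (measurable_sumElim_apply mX (measurable_sumElim_apply mY mZ))
    (.inl i) (.inr (.inl i)) (.inr (.inr i)) (by simp) (by simp)

lemma identDistrib_prodMk_prodMk_of_iIndepFun_sumElim [IsFiniteMeasure P]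
    (mX : ∀ i, Measurable (X i)) (mY : ∀ i, Measurable (Y i)) (mZ : ∀ i, Measurable (Z i))
    (h : iIndepFun (Sum.elim X (Sum.elim Y Z)) P) {i j : ι}
    (hX : IdentDistrib (X i) (X j) P P) (hY : IdentDistrib (Y i) (Y j) P P)
    (hZ : IdentDistrib (Z i) (Z j) P P) :
    IdentDistrib (fun ω ↦ ((X i ω, Y i ω), Z i ω)) (fun ω ↦ ((X j ω, Y j ω), Z j ω)) P P :=
  (hX.prodMk hY (indepFun_of_iIndepFun_sumElim h i) (indepFun_of_iIndepFun_sumElim h j)).prodMk hZ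
    (indepFun_prodMk_of_iIndepFun_sumElim mX mY mZ h i)
    (indepFun_prodMk_of_iIndepFun_sumElim mX mY mZ h j)

end Triple

lemma memLp_two_mul_of_indepFun {X Y : Ω → ℝ} (hX : MemLp X 2 P)
    (hY : MemLp Y 2 P) (hXY : IndepFun X Y P) : MemLp (X * Y) 2 P := by
  rw [memLp_two_iff_integrable_sq (hX.1.mul hY.1)]
  simp only [Pi.mul_apply, mul_pow]
  exact (hXY.comp (measurable_id.pow_const 2) (measurable_id.pow_const 2)).integrable_mul
    hX.integrable_sq hY.integrable_sq

end Independence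

lemma sqrt_smul_inv_smul_sub {E : Type*} [AddCommGroup E] [Module ℝ E] (n : ℕ) (s m : E) :
    √n • ((n : ℝ)⁻¹ • s - m) = (√n)⁻¹ • (s - (n : ℝ) • m) := by
  have h : √(n : ℝ) * (n : ℝ)⁻¹ = (√n)⁻¹ := by
    rw [← div_eq_mul_inv, Real.sqrt_div_self]
  have h' : √(n : ℝ) = (√n)⁻¹ * n := by
    rw [inv_mul_eq_div, Real.div_sqrt]
  rw [smul_sub, smul_sub, smul_smul, smul_smul, h, ← h']

section InnerProductSpace

variable {E : Type*} [NormedAddCommGroup E] [InnerProductSpace ℝ E] [MeasurableSpace E]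
  [BorelSpace E]

lemma charFun_map_inner (ν : Measure E) (t : E) (s : ℝ) :
    charFun (ν.map (fun x ↦ ⟪t, x⟫_ℝ)) s = charFun ν (s • t) := by
  rw [charFun_apply, integral_map (by fun_prop) (by fun_prop), charFun_apply]
  simp [real_inner_comm, inner_smul_right]

lemma charFun_map_inner_comp {Y : Ω → E} (hY : AEMeasurable Y P) (t : E) (s : ℝ) :
    charFun (P.map (fun ω ↦ ⟪t, Y ω⟫_ℝ)) s = charFun (P.map Y) (s • t) := by
  rw [← charFun_map_inner, AEMeasurable.map_map_of_aemeasurable (by fun_prop) hY]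
  rfl

variable [FiniteDimensional ℝ E] [IsProbabilityMeasure P] [IsProbabilityMeasure P']

theorem tendstoInDistribution_of_forall_inner {X : ℕ → Ω → E} {Y : Ω' → E}
    (hX : ∀ n, AEMeasurable (X n) P) (hY : AEMeasurable Y P')
    (h : ∀ t, TendstoInDistribution (fun n ω ↦ ⟪t, X n ω⟫_ℝ) atTop (fun ω ↦ ⟪t, Y ω⟫_ℝ)
      (fun _ ↦ P) P') :
    TendstoInDistribution X atTop Y (fun _ ↦ P) P' := by
  refine ⟨hX, hY, ProbabilityMeasure.tendsto_iff_tendsto_charFun.2 fun t ↦ ?_⟩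
  simpa [charFun_map_inner_comp, hX, hY] using
    ProbabilityMeasure.tendsto_iff_tendsto_charFun.1 (h t).tendsto 1

theorem tendstoInDistribution_sqrt_smul_mean_sub {Z : ℕ → Ω → E} {Y : Ω' → E}
    (hY : AEMeasurable Y P')
    (hlaw : ∀ t, HasLaw (fun ω ↦ ⟪t, Y ω⟫_ℝ)
      (gaussianReal 0 Var[fun ω ↦ ⟪t, Z 0 ω⟫_ℝ; P].toNNReal) P')
    (hZ : MemLp (Z 0) 2 P) (hindep : iIndepFun Z P)
    (hident : ∀ i, IdentDistrib (Z i) (Z 0) P P) :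
    TendstoInDistribution
      (fun (n : ℕ) ω ↦ √n • ((n : ℝ)⁻¹ • ∑ k ∈ Finset.range n, Z k ω - ∫ ω, Z 0 ω ∂P))
      atTop Y (fun _ ↦ P) P' := by
  have := FiniteDimensional.proper ℝ E
  have mZ : ∀ k, AEMeasurable (Z k) P := fun k ↦ (hident k).aemeasurable_fst
  have hmean : ∀ t, ∫ ω, ⟪t, Z 0 ω⟫_ℝ ∂P = ⟪t, ∫ ω, Z 0 ω ∂P⟫_ℝ :=
    integral_inner (hZ.integrable one_le_two)
  refine tendstoInDistribution_of_forall_inner (fun n ↦ by fun_prop) hY fun t ↦ ?_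
  have hclt := tendstoInDistribution_inv_sqrt_mul_sum_sub (X := fun k ω ↦ ⟪t, Z k ω⟫_ℝ)
    (hlaw t) (hZ.const_inner t) (hindep.comp (fun _ z ↦ ⟪t, z⟫_ℝ) (by fun_prop))
    (fun k ↦ (hident k).comp (u := fun z ↦ ⟪t, z⟫_ℝ) (by fun_prop))
  simpa only [sqrt_smul_inv_smul_sub, inner_smul_right, inner_sub_right, inner_sum, hmean]
    using hclt

end InnerProductSpace

section Complex

lemma hasLaw_inner_gaussianReal_prod (v w : NNReal) (t : ℂ) :
    HasLaw (fun p : ℝ × ℝ ↦ ⟪t, equivRealProdCLM.symm p⟫_ℝ)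
      (gaussianReal 0 (.mk (t.re ^ 2) (sq_nonneg _) * v + .mk (t.im ^ 2) (sq_nonneg _) * w))
      ((gaussianReal 0 v).prod (gaussianReal 0 w)) where
  aemeasurable := by fun_prop
  map_eq := by
    have hfst : HasLaw Prod.fst (gaussianReal 0 v) ((gaussianReal 0 v).prod (gaussianReal 0 w)) :=
      ⟨by fun_prop, by simp⟩
    have hsnd : HasLaw Prod.snd (gaussianReal 0 w) ((gaussianReal 0 v).prod (gaussianReal 0 w)) :=
      ⟨by fun_prop, by simp⟩
    have hindep := indepFun_prod (μ := gaussianReal 0 v) (ν := gaussianReal 0 w)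
      (measurable_const_mul t.re) (measurable_const_mul t.im)
    have hsum := gaussianReal_add_gaussianReal_of_indepFun hindep
      (gaussianReal_const_mul hfst t.re).map_eq (gaussianReal_const_mul hsnd t.im).map_eq
    convert! hsum using 2
    · ext p
      simp [Complex.inner, mul_comm]
    · simp

lemma integrable_sq_of_memLp_two {𝕜 : Type*} [NormedRing 𝕜] {Z : Ω → 𝕜} (hZ : MemLp Z 2 P) :
    Integrable (fun ω ↦ Z ω ^ 2) P := by
  simpa only [sq] using! hZ.integrable_mul hZ

variable [IsProbabilityMeasure P]

lemma variance_inner_of_covariance_re_im_eq_zero {Z : Ω → ℂ} (hZ : MemLp Z 2 P)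
    (h : cov[fun ω ↦ (Z ω).re, fun ω ↦ (Z ω).im; P] = 0) (t : ℂ) :
    Var[fun ω ↦ ⟪t, Z ω⟫_ℝ; P] =
      t.re ^ 2 * Var[fun ω ↦ (Z ω).re; P] + t.im ^ 2 * Var[fun ω ↦ (Z ω).im; P] := by
  have hre : MemLp (fun ω ↦ t.re * (Z ω).re) 2 P := hZ.re.const_mul _
  have him : MemLp (fun ω ↦ t.im * (Z ω).im) 2 P := hZ.im.const_mul _
  have hinner : ∀ ω, ⟪t, Z ω⟫_ℝ = t.re * (Z ω).re + t.im * (Z ω).im := fun ω ↦ by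
    simp [Complex.inner, mul_comm]
  simp only [hinner]
  rw [variance_fun_add hre him, variance_const_mul, variance_const_mul,
    covariance_const_mul_left, covariance_const_mul_right, h]
  ring

theorem tendstoInDistribution_sqrt_smul_mean_sub_of_uncorrelated {Z : ℕ → Ω → ℂ}
    (hZ : MemLp (Z 0) 2 P) (hindep : iIndepFun Z P) (hident : ∀ i, IdentDistrib (Z i) (Z 0) P P)
    (hcov : cov[fun ω ↦ (Z 0 ω).re, fun ω ↦ (Z 0 ω).im; P] = 0) :
    TendstoInDistribution
      (fun (n : ℕ) ω ↦ √n • ((n : ℝ)⁻¹ • ∑ k ∈ Finset.range n, Z k ω - ∫ ω, Z 0 ω ∂P))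
      atTop equivRealProdCLM.symm (fun _ ↦ P)
      ((gaussianReal 0 Var[fun ω ↦ (Z 0 ω).re; P].toNNReal).prod
        (gaussianReal 0 Var[fun ω ↦ (Z 0 ω).im; P].toNNReal)) := by
  refine tendstoInDistribution_sqrt_smul_mean_sub (by fun_prop) (fun t ↦ ?_) hZ hindep hident
  convert! hasLaw_inner_gaussianReal_prod _ _ t using 2
  rw [variance_inner_of_covariance_re_im_eq_zero hZ hcov]
  ext
  simp [variance_nonneg, mul_nonneg, sq_nonneg]

variable {Z : Ω → ℂ}

lemma variance_re_eq (hZ : MemLp Z 2 P) :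
    Var[fun ω ↦ (Z ω).re; P] =
      (∫ ω, ‖Z ω‖ ^ 2 ∂P + (∫ ω, Z ω ^ 2 ∂P).re) / 2 - (∫ ω, Z ω ∂P).re ^ 2 := by
  have hre : ∀ z : ℂ, z.re ^ 2 = (‖z‖ ^ 2 + (z ^ 2).re) / 2 := fun z ↦ by
    rw [Complex.sq_norm, normSq_apply, sq z, mul_re]
    ring
  have hsq : Integrable (fun ω ↦ Z ω ^ 2) P := integrable_sq_of_memLp_two hZ
  have hnorm : Integrable (fun ω ↦ ‖Z ω‖ ^ 2) P := hZ.integrable_norm_pow two_ne_zero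
  have hmean : ∫ ω, (Z ω).re ∂P = (∫ ω, Z ω ∂P).re := integral_re (hZ.integrable one_le_two)
  have hsecond : ∫ ω, (Z ω).re ^ 2 ∂P = (∫ ω, ‖Z ω‖ ^ 2 ∂P + (∫ ω, Z ω ^ 2 ∂P).re) / 2 := by
    have hsq_re : ∫ ω, (Z ω ^ 2).re ∂P = (∫ ω, Z ω ^ 2 ∂P).re := integral_re hsq
    simp only [hre]
    rw [integral_div, ← hsq_re]
    exact congrArg (· / 2) (integral_add hnorm hsq.re)
  rw [← hsecond, ← hmean]
  exact variance_eq_sub hZ.re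

lemma variance_im_eq (hZ : MemLp Z 2 P) :
    Var[fun ω ↦ (Z ω).im; P] =
      (∫ ω, ‖Z ω‖ ^ 2 ∂P - (∫ ω, Z ω ^ 2 ∂P).re) / 2 - (∫ ω, Z ω ∂P).im ^ 2 := by
  -- `Im z = Re (-i z)`
  have h := variance_re_eq (hZ.const_mul (-I))
  simpa [mul_pow, integral_const_mul, integral_neg, ← sub_eq_add_neg] using h

lemma covariance_re_im_eq (hZ : MemLp Z 2 P) :
    cov[fun ω ↦ (Z ω).re, fun ω ↦ (Z ω).im; P] =
      (∫ ω, Z ω ^ 2 ∂P).im / 2 - (∫ ω, Z ω ∂P).re * (∫ ω, Z ω ∂P).im := by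
  have hre_im : ∀ z : ℂ, z.re * z.im = (z ^ 2).im / 2 := fun z ↦ by
    rw [sq z, mul_im]
    ring
  have hZ1 : Integrable Z P := hZ.integrable one_le_two
  have hre : ∫ ω, (Z ω).re ∂P = (∫ ω, Z ω ∂P).re := integral_re hZ1
  have him : ∫ ω, (Z ω).im ∂P = (∫ ω, Z ω ∂P).im := integral_im hZ1
  have hsq : ∫ ω, (Z ω ^ 2).im ∂P = (∫ ω, Z ω ^ 2 ∂P).im :=
    integral_im (integrable_sq_of_memLp_two hZ)
  rw [← hre, ← him, ← hsq, ← integral_div]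
  simp only [← hre_im]
  exact covariance_eq_sub hZ.re hZ.im

end Complex

/-- The phasor `r e^{iθ}` of amplitude `r` and phase `θ`: the contribution of one reflector. -/
noncomputable def phasor (r θ : ℝ) : ℂ := r * exp (I * θ)

lemma measurable_phasor : Measurable fun p : ℝ × ℝ ↦ phasor p.1 p.2 := by
  unfold phasor
  fun_prop

lemma norm_phasor_sq (r θ : ℝ) : ‖phasor r θ‖ ^ 2 = r ^ 2 := by
  rw [phasor, norm_mul, mul_comm I, norm_exp_ofReal_mul_I, mul_one, norm_real, Real.norm_eq_abs,
    sq_abs]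

section PhasorMoments

variable {R Θ : Ω → ℝ}

lemma memLp_two_phasor (hR : MemLp R 2 P) (hΘ : AEMeasurable Θ P) :
    MemLp (fun ω ↦ phasor (R ω) (Θ ω)) 2 P := by
  have hmeas : AEMeasurable (fun ω ↦ phasor (R ω) (Θ ω)) P :=
    measurable_phasor.comp_aemeasurable (hR.1.aemeasurable.prodMk hΘ)
  rw [memLp_two_iff_integrable_sq_norm hmeas.aestronglyMeasurable]
  simpa only [norm_phasor_sq] using hR.integrable_sq

lemma integral_phasor_pow (hR : AEMeasurable R P) (hΘ : AEMeasurable Θ P) (hRΘ : IndepFun R Θ P)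
    (p : ℕ) :
    ∫ ω, phasor (R ω) (Θ ω) ^ p ∂P = (∫ ω, R ω ^ p ∂P : ℝ) * ∫ ω, exp (p * I * Θ ω) ∂P := by
  have hpow : ∀ r θ : ℝ, phasor r θ ^ p = ((r ^ p : ℝ) : ℂ) * exp (p * I * θ) := fun r θ ↦ by
    rw [phasor, mul_pow, ← exp_nat_mul, mul_assoc, ofReal_pow]
  simp only [hpow]
  rw [← integral_complex_ofReal]
  exact hRΘ.integral_fun_comp_mul_comp (f := fun r : ℝ ↦ ((r ^ p : ℝ) : ℂ))
    (g := fun θ : ℝ ↦ exp (p * I * θ)) hR hΘ (by fun_prop) (by fun_prop)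

lemma integral_phasor (hR : AEMeasurable R P) (hΘ : AEMeasurable Θ P) (hRΘ : IndepFun R Θ P)
    {φ₁ : ℝ} (hφ₁ : (φ₁ : ℂ) = ∫ ω, exp (I * Θ ω) ∂P) :
    ∫ ω, phasor (R ω) (Θ ω) ∂P = ((∫ ω, R ω ∂P) * φ₁ : ℝ) := by
  simpa [hφ₁] using integral_phasor_pow hR hΘ hRΘ 1

lemma integral_phasor_sq (hR : AEMeasurable R P) (hΘ : AEMeasurable Θ P) (hRΘ : IndepFun R Θ P)
    {φ₂ : ℝ} (hφ₂ : (φ₂ : ℂ) = ∫ ω, exp (2 * I * Θ ω) ∂P) :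
    ∫ ω, phasor (R ω) (Θ ω) ^ 2 ∂P = ((∫ ω, R ω ^ 2 ∂P) * φ₂ : ℝ) := by
  simpa [hφ₂] using integral_phasor_pow hR hΘ hRΘ 2

variable [IsProbabilityMeasure P] {φ₁ φ₂ : ℝ}
  (hR : MemLp R 2 P) (hΘ : AEMeasurable Θ P) (hRΘ : IndepFun R Θ P)
  (hφ₁ : (φ₁ : ℂ) = ∫ ω, exp (I * Θ ω) ∂P) (hφ₂ : (φ₂ : ℂ) = ∫ ω, exp (2 * I * Θ ω) ∂P)

include hR hΘ hRΘ hφ₁ hφ₂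

lemma variance_phasor_re :
    Var[fun ω ↦ (phasor (R ω) (Θ ω)).re; P] =
      (∫ ω, R ω ^ 2 ∂P) * (1 + φ₂) / 2 - ((∫ ω, R ω ∂P) * φ₁) ^ 2 := by
  rw [variance_re_eq (memLp_two_phasor hR hΘ), integral_phasor hR.1.aemeasurable hΘ hRΘ hφ₁,
    integral_phasor_sq hR.1.aemeasurable hΘ hRΘ hφ₂, ofReal_re, ofReal_re]
  simp only [norm_phasor_sq]
  ring

lemma variance_phasor_im :
    Var[fun ω ↦ (phasor (R ω) (Θ ω)).im; P] = (∫ ω, R ω ^ 2 ∂P) * (1 - φ₂) / 2 := by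
  rw [variance_im_eq (memLp_two_phasor hR hΘ), integral_phasor hR.1.aemeasurable hΘ hRΘ hφ₁,
    integral_phasor_sq hR.1.aemeasurable hΘ hRΘ hφ₂, ofReal_re, ofReal_im]
  simp only [norm_phasor_sq]
  ring

lemma covariance_phasor_re_im :
    cov[fun ω ↦ (phasor (R ω) (Θ ω)).re, fun ω ↦ (phasor (R ω) (Θ ω)).im; P] = 0 := by
  rw [covariance_re_im_eq (memLp_two_phasor hR hΘ), integral_phasor hR.1.aemeasurable hΘ hRΘ hφ₁,
    integral_phasor_sq hR.1.aemeasurable hΘ hRΘ hφ₂, ofReal_im, ofReal_im]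
  ring

end PhasorMoments

theorem tendstoInDistribution_sqrt_smul_mean_phasor_sub [IsProbabilityMeasure P]
    {R Θ : ℕ → Ω → ℝ} {φ₁ φ₂ : ℝ}
    (hindep : iIndepFun (fun i ω ↦ (R i ω, Θ i ω)) P)
    (hident : ∀ i, IdentDistrib (fun ω ↦ (R i ω, Θ i ω)) (fun ω ↦ (R 0 ω, Θ 0 ω)) P P)
    (hR : MemLp (R 0) 2 P) (hRΘ : IndepFun (R 0) (Θ 0) P)
    (hφ₁ : (φ₁ : ℂ) = ∫ ω, exp (I * Θ 0 ω) ∂P) (hφ₂ : (φ₂ : ℂ) = ∫ ω, exp (2 * I * Θ 0 ω) ∂P) :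
    TendstoInDistribution
      (fun (n : ℕ) ω ↦ √n • ((n : ℝ)⁻¹ • ∑ i ∈ Finset.range n, phasor (R i ω) (Θ i ω) -
        (((∫ ω, R 0 ω ∂P) * φ₁ : ℝ) : ℂ)))
      atTop equivRealProdCLM.symm (fun _ ↦ P)
      ((gaussianReal 0 ((∫ ω, R 0 ω ^ 2 ∂P) * (1 + φ₂) / 2
          - ((∫ ω, R 0 ω ∂P) * φ₁) ^ 2).toNNReal).prod
        (gaussianReal 0 ((∫ ω, R 0 ω ^ 2 ∂P) * (1 - φ₂) / 2).toNNReal)) := by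
  have hΘ : AEMeasurable (Θ 0) P := (hident 0).aemeasurable_fst.snd
  rw [← variance_phasor_re hR hΘ hRΘ hφ₁ hφ₂, ← variance_phasor_im hR hΘ hRΘ hφ₁ hφ₂,
    ← integral_phasor hR.1.aemeasurable hΘ hRΘ hφ₁]
  exact tendstoInDistribution_sqrt_smul_mean_sub_of_uncorrelated (memLp_two_phasor hR hΘ)
    (hindep.comp (fun _ p ↦ phasor p.1 p.2) fun _ ↦ measurable_phasor)
    (fun i ↦ (hident i).comp measurable_phasor)
    (covariance_phasor_re_im hR hΘ hRΘ hφ₁ hφ₂)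

/-- The normalized composite channel coefficient `Hₙ` of `n` reflectors with hop magnitudes `A`, `B`
and phase errors `Θ`; it is `0` for `n = 0`. -/
noncomputable def compositeChannel (A B Θ : ℕ → Ω → ℝ) (n : ℕ) (ω : Ω) : ℂ :=
  (n : ℂ)⁻¹ * ∑ i ∈ Finset.range n, (A i ω : ℂ) * (B i ω : ℂ) * exp (I * (Θ i ω : ℂ))

lemma compositeChannel_eq_smul_sum_phasor (A B Θ : ℕ → Ω → ℝ) (n : ℕ) (ω : Ω) :
    compositeChannel A B Θ n ω =
      (n : ℝ)⁻¹ • ∑ i ∈ Finset.range n, phasor (A i ω * B i ω) (Θ i ω) := by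
  simp [compositeChannel, phasor]

theorem lrs_channel_clt_general [IsProbabilityMeasure P] {A B Θ : ℕ → Ω → ℝ}
    {a₁ a₂ s₁ s₂ φ₁ φ₂ : ℝ}
    (hindep : iIndepFun (Sum.elim A (Sum.elim B Θ) : ℕ ⊕ (ℕ ⊕ ℕ) → Ω → ℝ) P)
    (mA : ∀ i, Measurable (A i)) (mB : ∀ i, Measurable (B i)) (mΘ : ∀ i, Measurable (Θ i))
    (hA : ∀ i, IdentDistrib (A i) (A 0) P P) (hB : ∀ i, IdentDistrib (B i) (B 0) P P)
    (hΘ : ∀ i, IdentDistrib (Θ i) (Θ 0) P P)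
    (hA_L2 : MemLp (A 0) 2 P) (hB_L2 : MemLp (B 0) 2 P)
    (hA1 : ∫ ω, A 0 ω ∂P = a₁) (hB1 : ∫ ω, B 0 ω ∂P = a₂)
    (hA2 : ∫ ω, A 0 ω ^ 2 ∂P = s₁) (hB2 : ∫ ω, B 0 ω ^ 2 ∂P = s₂)
    (hφ₁ : (φ₁ : ℂ) = ∫ ω, exp (I * Θ 0 ω) ∂P) (hφ₂ : (φ₂ : ℂ) = ∫ ω, exp (2 * I * Θ 0 ω) ∂P) :
    TendstoInDistribution
      (fun (n : ℕ) ω ↦ (√n * ((compositeChannel A B Θ n ω).re - a₁ * a₂ * φ₁),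
        √n * (compositeChannel A B Θ n ω).im))
      atTop id (fun _ ↦ P)
      ((gaussianReal 0 (s₁ * s₂ * (1 + φ₂) / 2 - (a₁ * a₂ * φ₁) ^ 2).toNNReal).prod
        (gaussianReal 0 (s₁ * s₂ * (1 - φ₂) / 2).toNNReal)) := by
  have hAB := indepFun_of_iIndepFun_sumElim hindep 0
  have hgain : Measurable fun p : (ℝ × ℝ) × ℝ ↦ (p.1.1 * p.1.2, p.2) := by fun_prop
  have hmean : ∫ ω, A 0 ω * B 0 ω ∂P = a₁ * a₂ := by
    rw [hAB.integral_fun_mul_eq_mul_integral hA_L2.1 hB_L2.1, hA1, hB1]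
  have hsecond : ∫ ω, (A 0 ω * B 0 ω) ^ 2 ∂P = s₁ * s₂ := by
    simp only [mul_pow]
    rw [hAB.integral_fun_comp_mul_comp (f := (· ^ 2)) (g := (· ^ 2)) (mA 0).aemeasurable
      (mB 0).aemeasurable (by fun_prop) (by fun_prop), hA2, hB2]
  have hclt := tendstoInDistribution_sqrt_smul_mean_phasor_sub (R := fun i ω ↦ A i ω * B i ω)
    ((iIndepFun_prodMk_prodMk_of_iIndepFun_sumElim mA mB mΘ hindep).comp _ fun _ ↦ hgain)
    (fun i ↦ (identDistrib_prodMk_prodMk_of_iIndepFun_sumElim mA mB mΘ hindep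
      (hA i) (hB i) (hΘ i)).comp hgain)
    (memLp_two_mul_of_indepFun hA_L2 hB_L2 hAB)
    ((indepFun_prodMk_of_iIndepFun_sumElim mA mB mΘ hindep 0).comp measurable_mul measurable_id)
    hφ₁ hφ₂
  simp only [hmean, hsecond, ← compositeChannel_eq_smul_sum_phasor] at hclt
  simpa [Function.comp_def] using! hclt.continuous_comp equivRealProdCLM.continuous

end

/-- Central limit theorem for the composite LRS channel coefficient:
`√n (Re H_n - a² φ₁, Im H_n)` converges in distribution (weak convergence of the
pushforward laws) to the centered bivariate Gaussian with diagonal covariance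
`diag(½(1 + φ₂ - 2 φ₁² a⁴), ½(1 - φ₂))`. -/
theorem lrs_channel_clt
    {Ω : Type*} [MeasurableSpace Ω] {μ : Measure Ω} [IsProbabilityMeasure μ]
    (A B Θ : ℕ → Ω → ℝ) (a₁ a₂ a φ₁ φ₂ : ℝ)
    (hIndep : ProbabilityTheory.iIndepFun
      (Sum.elim A (Sum.elim B Θ) : ℕ ⊕ (ℕ ⊕ ℕ) → Ω → ℝ) μ)
    (hAmeas : ∀ i, Measurable (A i)) (hBmeas : ∀ i, Measurable (B i))
    (hΘmeas : ∀ i, Measurable (Θ i))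
    (hAiid : ∀ i, IdentDistrib (A i) (A 0) μ μ)
    (hBiid : ∀ i, IdentDistrib (B i) (B 0) μ μ)
    (hΘiid : ∀ i, IdentDistrib (Θ i) (Θ 0) μ μ)
    (hApos : ∀ i ω, 0 ≤ A i ω) (hBpos : ∀ i ω, 0 ≤ B i ω)
    (hΘrange : ∀ i ω, Θ i ω ∈ Set.Ico (-Real.pi) Real.pi)
    (hAint : Integrable (A 0) μ) (hBint : Integrable (B 0) μ)
    (hA2int : Integrable (fun ω => A 0 ω ^ 2) μ)
    (hB2int : Integrable (fun ω => B 0 ω ^ 2) μ)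
    (hA1 : ∫ ω, A 0 ω ∂μ = a₁) (hB1 : ∫ ω, B 0 ω ∂μ = a₂)
    (hA2 : ∫ ω, A 0 ω ^ 2 ∂μ = 1) (hB2 : ∫ ω, B 0 ω ^ 2 ∂μ = 1)
    (ha : a = Real.sqrt (a₁ * a₂))
    (hφ₁ : (φ₁ : ℂ) = ∫ ω, Complex.exp (Complex.I * (Θ 0 ω : ℂ)) ∂μ)
    (hφ₂ : (φ₂ : ℂ) = ∫ ω, Complex.exp (2 * Complex.I * (Θ 0 ω : ℂ)) ∂μ)
    (H : ℕ → Ω → ℂ)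
    (hH : H = fun (n : ℕ) (ω : Ω) => (n : ℂ)⁻¹ *
      ∑ i ∈ Finset.range n, (A i ω : ℂ) * (B i ω : ℂ) * Complex.exp (Complex.I * (Θ i ω : ℂ)))
    (X : ℕ → Ω → ℝ × ℝ)
    (hX : X = fun (n : ℕ) (ω : Ω) =>
      (Real.sqrt (n : ℝ) * ((H n ω).re - a ^ 2 * φ₁), Real.sqrt (n : ℝ) * (H n ω).im))
    (G : Measure (ℝ × ℝ))
    (hG : G = (gaussianReal 0 (((1 + φ₂ - 2 * φ₁ ^ 2 * a ^ 4) / 2).toNNReal)).prod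
      (gaussianReal 0 (((1 - φ₂) / 2).toNNReal))) :
    ∀ f : BoundedContinuousFunction (ℝ × ℝ) ℝ,
      Tendsto (fun n => ∫ x, f x ∂(μ.map (X n))) atTop (𝓝 (∫ x, f x ∂G)) := by
  have hA0 : MemLp (A 0) 2 μ :=
    (memLp_two_iff_integrable_sq (hAmeas 0).aestronglyMeasurable).2 hA2int
  have hB0 : MemLp (B 0) 2 μ :=
    (memLp_two_iff_integrable_sq (hBmeas 0).aestronglyMeasurable).2 hB2int
  have ha_sq : a ^ 2 = a₁ * a₂ := by
    rw [ha, Real.sq_sqrt (mul_nonneg (hA1 ▸ integral_nonneg (hApos 0))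
      (hB1 ▸ integral_nonneg (hBpos 0)))]
  have hclt := lrs_channel_clt_general hIndep hAmeas hBmeas hΘmeas hAiid hBiid hΘiid hA0 hB0
    hA1 hB1 hA2 hB2 hφ₁ hφ₂
  have hvar : 1 * 1 * (1 + φ₂) / 2 - (a₁ * a₂ * φ₁) ^ 2 = (1 + φ₂ - 2 * φ₁ ^ 2 * a ^ 4) / 2 := by
    rw [← ha_sq]
    ring
  subst hX hG hH
  rw [hvar, one_mul, one_mul, ← ha_sq] at hclt
  simpa [compositeChannel] using
    ProbabilityMeasure.tendsto_iff_forall_integral_tendsto.1 hclt.tendsto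
end

section
/- Let μ ∈ ℝ, σ > 0, and t ∈ ℝ with 0 ≤ 4σ²t < 1. Then μ²t/(1 − 2σ²t) = −(μ²/(4σ²)) ln(1 − 4σ²t) − g(t), where g(t) = (μ²/(4σ²)) Σ_{k=3}^∞ (1 − k/2^{k−1}) (4σ²t)^k / k and the series converges absolutely. -/
open Real

/-!
With `x = 4σ²t`, the non-central part is `(μ²/(4σ²)) * (x / (1 - x / 2))`, a geometric series in
`x / 2`, while `-log (1 - x)` is the Mercator series. Subtracting the two term by term leaves
`(1 - k / 2 ^ (k - 1)) * x ^ k / k`, which vanishes for `k = 1` and `k = 2`.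
-/

theorem hasSum_neg_log_sub_geometric {x : ℝ} (hx : |x| < 1) :
    HasSum (fun k : ℕ => (1 - ((k : ℝ) + 1) / 2 ^ k) * x ^ (k + 1) / ((k : ℝ) + 1))
      (-log (1 - x) - x / (1 - x / 2)) := by
  have hx_half : |x / 2| < 1 := by
    rw [abs_div, abs_two]
    linarith [abs_nonneg x]
  have h_geom : HasSum (fun k : ℕ => x * (x / 2) ^ k) (x / (1 - x / 2)) :=
    (hasSum_geometric_of_abs_lt_one hx_half).mul_left x
  refine ((hasSum_pow_div_log_of_abs_lt_one hx).sub h_geom).congr_fun ?_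
  intro k
  have hk : (k : ℝ) + 1 ≠ 0 := k.cast_add_one_ne_zero
  rw [div_pow]
  field_simp
  ring

theorem hasSum_neg_log_sub_geometric_nat_add_two {x : ℝ} (hx : |x| < 1) :
    HasSum (fun k : ℕ => (1 - ((k : ℝ) + 3) / 2 ^ (k + 2)) * x ^ (k + 3) / ((k : ℝ) + 3))
      (-log (1 - x) - x / (1 - x / 2)) := by
  have h_tail := (hasSum_nat_add_iff' 2).mpr (hasSum_neg_log_sub_geometric hx)
  have h_index (k : ℕ) : ((k + 2 : ℕ) : ℝ) + 1 = k + 3 := by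
    push_cast
    ring
  have h_vanish : ∑ k ∈ Finset.range 2,
      (1 - ((k : ℝ) + 1) / 2 ^ k) * x ^ (k + 1) / ((k : ℝ) + 1) = 0 := by
    norm_num [Finset.sum_range_succ]
  simpa only [h_vanish, sub_zero, h_index] using h_tail

theorem noncentral_cgf_series_decomposition_general
    (μ σ t : ℝ) (hσ : σ ≠ 0) (ht : |4 * σ ^ 2 * t| < 1)
    (term : ℕ → ℝ)
    (hterm : term = fun k : ℕ =>
      (1 - ((k : ℝ) + 3) / 2 ^ (k + 2)) * (4 * σ ^ 2 * t) ^ (k + 3) / ((k : ℝ) + 3)) :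
    Summable (fun k => |term k|) ∧
      μ ^ 2 * t / (1 - 2 * σ ^ 2 * t)
        = -(μ ^ 2 / (4 * σ ^ 2)) * log (1 - 4 * σ ^ 2 * t)
          - (μ ^ 2 / (4 * σ ^ 2)) * ∑' k, term k := by
  set x := 4 * σ ^ 2 * t with hx
  have h_sum : HasSum term (-log (1 - x) - x / (1 - x / 2)) :=
    hterm ▸ hasSum_neg_log_sub_geometric_nat_add_two ht
  have h_noncentral :
      μ ^ 2 * t / (1 - 2 * σ ^ 2 * t) = μ ^ 2 / (4 * σ ^ 2) * (x / (1 - x / 2)) := by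
    have h_half : 2 * σ ^ 2 * t = x / 2 := by rw [hx]; ring
    have h_t : t = x / (4 * σ ^ 2) := by rw [hx]; field_simp
    rw [h_half, h_t]
    ring
  refine ⟨h_sum.summable.abs, ?_⟩
  rw [h_noncentral, h_sum.tsum_eq]
  ring

/-- Series decomposition of the non-central part of the CGF:
for `0 ≤ 4σ²t < 1`,
`μ²t/(1 - 2σ²t) = -(μ²/(4σ²)) ln(1 - 4σ²t) - g(t)` where
`g(t) = (μ²/(4σ²)) Σ_{k≥3} (1 - k/2^(k-1)) (4σ²t)^k / k`, the series being
absolutely convergent. -/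
theorem noncentral_cgf_series_decomposition
    (μ σ t : ℝ) (hσ : 0 < σ) (ht0 : 0 ≤ 4 * σ ^ 2 * t) (ht1 : 4 * σ ^ 2 * t < 1)
    (term : ℕ → ℝ)
    (hterm : term = fun k : ℕ =>
      (1 - ((k : ℝ) + 3) / 2 ^ (k + 2)) * (4 * σ ^ 2 * t) ^ (k + 3) / ((k : ℝ) + 3)) :
    Summable (fun k => |term k|) ∧
      μ ^ 2 * t / (1 - 2 * σ ^ 2 * t)
        = -(μ ^ 2 / (4 * σ ^ 2)) * Real.log (1 - 4 * σ ^ 2 * t)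
          - (μ ^ 2 / (4 * σ ^ 2)) * ∑' k, term k :=
  noncentral_cgf_series_decomposition_general μ σ t hσ.ne'
    ((abs_of_nonneg ht0).trans_lt ht1) term hterm
end

section
/- Let μ ∈ ℝ with μ ≠ 0, σ > 0, and t ∈ ℝ with 0 < 4σ²t < 1, and set g(t) = (μ²/(4σ²)) Σ_{k=3}^∞ (1 − k/2^{k−1}) (4σ²t)^k / k. Then 0 ≤ g(t) < −4 μ² σ² t² ln(1 − 4σ² t); in particular g(t) = O(σ⁴) as σ → 0 for fixed t-range, so the remainder is of order n^{−2} when σ² = O(n^{−1}). -/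
open Real

/-!
With `x = 4σ²t`, the coefficients `1 - k/2^(k-1)` lie in `[0, 1]`, so the remainder series is
nonnegative and dominated by the logarithmic tail `∑_{k ≥ 3} x^k/k`. Replacing `1/k` by the strictly
larger `1/(k-2)` turns this tail into `x²` times the whole series of `-log (1 - x)`.
-/

section LogSeriesTail

variable {x : ℝ} {n : ℕ}

lemma pow_add_div_lt_pow_mul_pow_div (hx : 0 < x) (hn : n ≠ 0) (k : ℕ) :
    x ^ (k + n + 1) / (k + n + 1 : ℝ) < x ^ n * (x ^ (k + 1) / (k + 1 : ℝ)) := by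
  have hn' : (0 : ℝ) < n := by positivity
  calc x ^ (k + n + 1) / (k + n + 1 : ℝ) < x ^ (k + n + 1) / (k + 1 : ℝ) := by
        gcongr
        linarith
    _ = x ^ n * (x ^ (k + 1) / (k + 1 : ℝ)) := by ring

lemma summable_pow_add_div (hx : |x| < 1) (n : ℕ) :
    Summable fun k : ℕ ↦ x ^ (k + n + 1) / (k + n + 1 : ℝ) := by
  simpa only [Nat.cast_add] using
    (summable_nat_add_iff n).mpr (hasSum_pow_div_log_of_abs_lt_one hx).summable

lemma tsum_pow_add_div_lt (hx0 : 0 < x) (hx1 : x < 1) (hn : n ≠ 0) :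
    ∑' k : ℕ, x ^ (k + n + 1) / (k + n + 1 : ℝ) < x ^ n * -log (1 - x) := by
  have habs : |x| < 1 := by rwa [abs_of_pos hx0]
  have hlog := (hasSum_pow_div_log_of_abs_lt_one habs).mul_left (x ^ n)
  have hterm := pow_add_div_lt_pow_mul_pow_div hx0 hn
  rw [← hlog.tsum_eq]
  exact (summable_pow_add_div habs n).tsum_lt_tsum (fun k ↦ (hterm k).le) (hterm 0) hlog.summable

lemma abs_tsum_mul_pow_add_div_lt (hx0 : x ≠ 0) (hx1 : |x| < 1) (hn : n ≠ 0) {a : ℕ → ℝ}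
    (ha : ∀ k, |a k| ≤ 1) :
    |∑' k : ℕ, a k * x ^ (k + n + 1) / (k + n + 1 : ℝ)| < |x| ^ n * -log (1 - |x|) := by
  have hterm (k : ℕ) : ‖a k * x ^ (k + n + 1) / (k + n + 1 : ℝ)‖ ≤
      |x| ^ (k + n + 1) / (k + n + 1 : ℝ) := by
    have hden : |(k + n + 1 : ℝ)| = k + n + 1 := abs_of_pos (by positivity)
    rw [norm_eq_abs, abs_div, abs_mul, abs_pow, hden]
    gcongr
    exact mul_le_of_le_one_left (by positivity) (ha k)
  have hsum := summable_pow_add_div (x := |x|) (by rwa [abs_abs]) n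
  exact (tsum_of_norm_bounded hsum.hasSum hterm).trans_lt
    (tsum_pow_add_div_lt (abs_pos.mpr hx0) hx1 hn)

end LogSeriesTail

lemma one_sub_succ_div_two_pow_mem_Icc (n : ℕ) :
    1 - (n + 1 : ℝ) / 2 ^ n ∈ Set.Icc (0 : ℝ) 1 := by
  have hle : (n + 1 : ℝ) ≤ 2 ^ n := mod_cast Nat.lt_two_pow_self (n := n)
  exact ⟨sub_nonneg.mpr (div_le_one_of_le₀ hle (by positivity)), sub_le_self _ (by positivity)⟩

/-- The scale-free remainder, with `g(t) = (μ²/(4σ²)) * scaledRemainder (4σ²t)`. It is the power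
series of `-log (1 - x) - x / (1 - x / 2)`, whose terms of degree at most `2` cancel; the index is
shifted by `3` accordingly. -/
noncomputable def scaledRemainder (x : ℝ) : ℝ :=
  ∑' k : ℕ, (1 - ((k : ℝ) + 3) / 2 ^ (k + 2)) * x ^ (k + 3) / ((k : ℝ) + 3)

namespace scaledRemainder

lemma coeff_mem_Icc (k : ℕ) : 1 - ((k : ℝ) + 3) / 2 ^ (k + 2) ∈ Set.Icc (0 : ℝ) 1 := by
  convert one_sub_succ_div_two_pow_mem_Icc (k + 2) using 3
  push_cast
  ring

lemma nonneg {x : ℝ} (hx : 0 ≤ x) : 0 ≤ scaledRemainder x :=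
  tsum_nonneg fun k ↦ div_nonneg (mul_nonneg (coeff_mem_Icc k).1 (by positivity)) (by positivity)

lemma abs_lt_sq_mul_neg_log {x : ℝ} (hx0 : x ≠ 0) (hx1 : |x| < 1) :
    |scaledRemainder x| < |x| ^ 2 * -log (1 - |x|) := by
  have hcoeff (k : ℕ) : |1 - ((k : ℝ) + 3) / 2 ^ (k + 2)| ≤ 1 := by
    obtain ⟨h0, h1⟩ := coeff_mem_Icc k
    rwa [abs_of_nonneg h0]
  have hshift (k : ℕ) : (k : ℝ) + (2 : ℕ) + 1 = k + 3 := by norm_num [add_assoc]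
  simpa only [scaledRemainder, hshift] using abs_tsum_mul_pow_add_div_lt hx0 hx1 two_ne_zero hcoeff

end scaledRemainder

/-- Bound on the remainder of the CGF decomposition: for `μ ≠ 0`,
`σ > 0` and `0 < 4σ²t < 1`, the remainder
`g(t) = (μ²/(4σ²)) Σ_{k≥3} (1 - k/2^(k-1)) (4σ²t)^k / k` satisfies
`0 ≤ g(t) < -4 μ² σ² t² ln(1 - 4σ²t)`. -/
theorem noncentral_cgf_remainder_bound
    (μ σ t : ℝ) (hμ : μ ≠ 0) (hσ : 0 < σ) (ht0 : 0 < 4 * σ ^ 2 * t)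
    (ht1 : 4 * σ ^ 2 * t < 1) (g : ℝ)
    (hg : g = (μ ^ 2 / (4 * σ ^ 2)) * ∑' k : ℕ,
      (1 - ((k : ℝ) + 3) / 2 ^ (k + 2)) * (4 * σ ^ 2 * t) ^ (k + 3) / ((k : ℝ) + 3)) :
    0 ≤ g ∧ g < -(4 * μ ^ 2 * σ ^ 2 * t ^ 2) * Real.log (1 - 4 * σ ^ 2 * t) := by
  change g = μ ^ 2 / (4 * σ ^ 2) * scaledRemainder (4 * σ ^ 2 * t) at hg
  have hscale : 0 < μ ^ 2 / (4 * σ ^ 2) := by positivity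
  have hupper : scaledRemainder (4 * σ ^ 2 * t) <
      (4 * σ ^ 2 * t) ^ 2 * -log (1 - 4 * σ ^ 2 * t) := by
    have habs := abs_of_pos ht0
    have hbound := scaledRemainder.abs_lt_sq_mul_neg_log ht0.ne' (habs.trans_lt ht1)
    rw [habs] at hbound
    exact (le_abs_self _).trans_lt hbound
  rw [hg]
  refine ⟨mul_nonneg hscale.le (scaledRemainder.nonneg ht0.le), ?_⟩
  calc μ ^ 2 / (4 * σ ^ 2) * scaledRemainder (4 * σ ^ 2 * t)
      < μ ^ 2 / (4 * σ ^ 2) * ((4 * σ ^ 2 * t) ^ 2 * -log (1 - 4 * σ ^ 2 * t)) := by gcongr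
    _ = -(4 * μ ^ 2 * σ ^ 2 * t ^ 2) * Real.log (1 - 4 * σ ^ 2 * t) := by field_simp
end
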